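/- Let μ and μ̃ be Borel probability measures on X, p ≥ 1, k > 0, and let α ∈ (0, 1) be a constant. Set δ = ‖μ − μ̃‖_TV. Then min{ δ(1−α), (1/k)·W_{p,1−δ(1−α)}(μ, μ̃) } ≤ RPW_{p,k}(μ, μ̃) ≤ min{ δ, (1/k)·W_p(μ, μ̃) }. -/

import Mathlib

open MeasureTheory

noncomputable section

/-- `γ` is an `α`-partial transport plan from `μ` to `ν`: a Borel measure on `X × X` of
total mass `α` whose first marginal is dominated by `μ` and second marginal by `ν`. -/
def IsPartialPlan {X : Type*} [MeasurableSpace X] (μ ν : Measure X) (α : ℝ)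
    (γ : Measure (X × X)) : Prop :=
  γ Set.univ = ENNReal.ofReal α ∧ γ.map Prod.fst ≤ μ ∧ γ.map Prod.snd ≤ ν

/-- The cost `w_p(γ) = (∫ c(x,y)^p dγ)^(1/p)` of a transport plan. -/
def planCost {X : Type*} [MetricSpace X] [MeasurableSpace X] (p : ℝ)
    (γ : Measure (X × X)) : ℝ :=
  (∫ z, dist z.1 z.2 ^ p ∂γ) ^ (1 / p)

/-- The `α`-partial `p`-Wasserstein distance `W_{p,α}(μ, ν)`. -/
def partialW {X : Type*} [MetricSpace X] [MeasurableSpace X] (p α : ℝ)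
    (μ ν : Measure X) : ℝ :=
  sInf { c : ℝ | ∃ γ : Measure (X × X), IsPartialPlan μ ν α γ ∧ c = planCost p γ }

/-- The `(p,k)`-RPW distance: the least `ε ∈ [0,1]` with `W_{p,1-ε}(μ,ν) ≤ kε`. -/
def RPW {X : Type*} [MetricSpace X] [MeasurableSpace X] (p k : ℝ)
    (μ ν : Measure X) : ℝ :=
  sInf { ε : ℝ | ε ∈ Set.Icc (0:ℝ) 1 ∧ partialW p (1 - ε) μ ν ≤ k * ε }

/-- The total variation distance `‖μ − ν‖_TV = sup { |μ(A) − ν(A)| : A Borel }`. -/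
def TVdist {X : Type*} [MeasurableSpace X] (μ ν : Measure X) : ℝ :=
  sSup { r : ℝ | ∃ A : Set X, MeasurableSet A ∧ r = |(μ A).toReal - (ν A).toReal| }

lemma planCost_nonneg' {X : Type*} [MetricSpace X] [MeasurableSpace X] (p : ℝ)
    (γ : Measure (X × X)) : 0 ≤ planCost p γ := by
  unfold planCost
  exact Real.rpow_nonneg (integral_nonneg fun z => Real.rpow_nonneg dist_nonneg _) _

lemma partialW_nonneg' {X : Type*} [MetricSpace X] [MeasurableSpace X] (p α : ℝ)
    (μ ν : Measure X) : 0 ≤ partialW p α μ ν := by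
  apply Real.sInf_nonneg
  rintro c ⟨γ, -, rfl⟩
  exact planCost_nonneg' p γ

lemma partialW_le' {X : Type*} [MetricSpace X] [MeasurableSpace X] (p α : ℝ)
    (μ ν : Measure X) (γ : Measure (X × X)) (h : IsPartialPlan μ ν α γ) :
    partialW p α μ ν ≤ planCost p γ := by
  apply csInf_le
  · refine ⟨0, ?_⟩
    rintro c ⟨γ, -, rfl⟩
    exact planCost_nonneg' p γ
  · exact ⟨γ, h, rfl⟩

lemma plan_scale {X : Type*} [MeasurableSpace X] (a b : ℝ)
    (h0 : 0 ≤ a) (hab : a ≤ b) (μ ν : Measure X) (γ : Measure (X × X))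
    (h : IsPartialPlan μ ν b γ) :
    IsPartialPlan μ ν a (ENNReal.ofReal (a / b) • γ) := by
  obtain ⟨h1, h2, h3⟩ := h
  have hc : ENNReal.ofReal (a / b) ≤ 1 := by
    rw [ENNReal.ofReal_le_one]
    exact div_le_one_of_le₀ hab (h0.trans hab)
  have key : ∀ m m' : Measure X, m ≤ m' → ENNReal.ofReal (a / b) • m ≤ m' := by
    intro m m' hm
    refine Measure.le_iff'.2 fun s => ?_
    rw [Measure.smul_apply, smul_eq_mul]
    calc _ ≤ 1 * m s := by gcongr
      _ = m s := one_mul _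
      _ ≤ _ := hm s
  refine ⟨?_, ?_, ?_⟩
  · rw [Measure.smul_apply, smul_eq_mul, h1,
      ← ENNReal.ofReal_mul (div_nonneg h0 (h0.trans hab))]
    congr 1
    rcases eq_or_ne b 0 with hb | hb
    · subst hb
      simp; linarith
    · field_simp
  · rw [Measure.map_smul]; exact key _ _ h2
  · rw [Measure.map_smul]; exact key _ _ h3

lemma planCost_scale {X : Type*} [MetricSpace X] [MeasurableSpace X] (p : ℝ) (hp : 1 ≤ p)
    (c : ℝ) (h0 : 0 ≤ c) (h1 : c ≤ 1) (γ : Measure (X × X)) :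
    planCost p (ENNReal.ofReal c • γ) ≤ planCost p γ := by
  unfold planCost
  have hI : 0 ≤ ∫ z, dist z.1 z.2 ^ p ∂γ :=
    integral_nonneg fun z => Real.rpow_nonneg dist_nonneg _
  rw [integral_smul_measure, ENNReal.toReal_ofReal h0, smul_eq_mul]
  apply Real.rpow_le_rpow (mul_nonneg h0 hI)
  · nlinarith
  · positivity

lemma plan_prod {X : Type*} [MeasurableSpace X] (μ ν : Measure X)
    [IsProbabilityMeasure μ] [IsProbabilityMeasure ν] :
    IsPartialPlan μ ν 1 (μ.prod ν) := by
  refine ⟨by simp, ?_, ?_⟩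
  · rw [Measure.map_fst_prod]; simp
  · rw [Measure.map_snd_prod]; simp

lemma partialW_mono {X : Type*} [MetricSpace X] [MeasurableSpace X] (p : ℝ) (hp : 1 ≤ p)
    (μ ν : Measure X) [IsProbabilityMeasure μ] [IsProbabilityMeasure ν]
    (a b : ℝ) (h0 : 0 ≤ a) (hab : a ≤ b) (hb : b ≤ 1) :
    partialW p a μ ν ≤ partialW p b μ ν := by
  apply le_csInf
  · exact ⟨_, _, plan_scale b 1 (h0.trans hab) hb μ ν _ (plan_prod μ ν), rfl⟩
  · rintro c ⟨γ, hγ, rfl⟩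
    exact (partialW_le' p a μ ν _ (plan_scale a b h0 hab μ ν γ hγ)).trans
      (planCost_scale p hp _ (div_nonneg h0 (h0.trans hab))
        (div_le_one_of_le₀ hab (h0.trans hab)) γ)

lemma abs_diff_le {X : Type*} [MeasurableSpace X] (μ ν : Measure X)
    [IsProbabilityMeasure μ] [IsProbabilityMeasure ν] (A : Set X) :
    |(μ A).toReal - (ν A).toReal| ≤ 1 := by
  have h1 : (μ A).toReal ≤ 1 := measureReal_le_one
  have h2 : (ν A).toReal ≤ 1 := measureReal_le_one
  have h3 : 0 ≤ (μ A).toReal := ENNReal.toReal_nonneg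
  have h4 : 0 ≤ (ν A).toReal := ENNReal.toReal_nonneg
  rw [abs_le]; constructor <;> linarith

lemma le_TV {X : Type*} [MeasurableSpace X] (μ ν : Measure X)
    [IsProbabilityMeasure μ] [IsProbabilityMeasure ν] (A : Set X) (hA : MeasurableSet A) :
    |(μ A).toReal - (ν A).toReal| ≤ TVdist μ ν := by
  apply le_csSup
  · refine ⟨1, ?_⟩
    rintro r ⟨B, -, rfl⟩
    exact abs_diff_le μ ν B
  · exact ⟨A, hA, rfl⟩

lemma TV_le_one {X : Type*} [MeasurableSpace X] (μ ν : Measure X)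
    [IsProbabilityMeasure μ] [IsProbabilityMeasure ν] : TVdist μ ν ≤ 1 := by
  refine csSup_le ⟨_, ∅, MeasurableSet.empty, rfl⟩ ?_
  rintro r ⟨B, -, rfl⟩
  exact abs_diff_le μ ν B

lemma partialW_TV {X : Type*} [MetricSpace X] [CompactSpace X] [MeasurableSpace X]
    [BorelSpace X] (p : ℝ) (hp : 1 ≤ p)
    (μ ν : Measure X) [IsProbabilityMeasure μ] [IsProbabilityMeasure ν] :
    partialW p (1 - TVdist μ ν) μ ν ≤ 0 := by
  obtain ⟨s, hs, h1, h2⟩ := hahn_decomposition μ ν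
  set η : Measure X := ν.restrict s + μ.restrict sᶜ with hη
  have hd : Measurable (fun x : X => (x, x)) := by fun_prop
  have hημ : η ≤ μ := by
    refine Measure.le_iff.2 fun t ht => ?_
    rw [hη, Measure.add_apply, Measure.restrict_apply ht, Measure.restrict_apply ht,
      ← measure_inter_add_sdiff t hs]
    exact add_le_add (h1 _ (ht.inter hs) Set.inter_subset_right) le_rfl
  have hην : η ≤ ν := by
    refine Measure.le_iff.2 fun t ht => ?_
    rw [hη, Measure.add_apply, Measure.restrict_apply ht, Measure.restrict_apply ht,
      ← measure_inter_add_sdiff t hs]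
    exact add_le_add le_rfl (h2 _ (ht.inter hs.compl) Set.inter_subset_right)
  have hm1 : η.real Set.univ = 1 - ((μ s).toReal - (ν s).toReal) := by
    have : μ.real sᶜ = 1 - μ.real s := probReal_compl_eq_one_sub hs
    rw [hη, measureReal_add_apply]
    simp only [measureReal_restrict_apply_univ, this]
    simp only [measureReal_def]
    ring
  have hfin : IsFiniteMeasure η := by rw [hη]; infer_instance
  have hm0 : η.real Set.univ ≤ 1 := by
    have := ENNReal.toReal_mono (measure_ne_top μ _) (hημ Set.univ)
    simpa [measureReal_def] using this
  have hle : 1 - TVdist μ ν ≤ η.real Set.univ := by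
    rw [hm1]
    have := (le_abs_self _).trans (le_TV μ ν s hs)
    linarith
  refine (partialW_mono p hp μ ν _ _ (by linarith [TV_le_one μ ν]) hle hm0).trans ?_
  refine (partialW_le' p _ μ ν (η.map fun x => (x, x)) ⟨?_, ?_, ?_⟩).trans ?_
  · rw [Measure.map_apply hd MeasurableSet.univ, Set.preimage_univ, measureReal_def,
      ENNReal.ofReal_toReal (measure_ne_top _ _)]
  · rw [Measure.map_map measurable_fst hd]
    change η.map id ≤ μ
    rwa [Measure.map_id]
  · rw [Measure.map_map measurable_snd hd]
    change η.map id ≤ ν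
    rwa [Measure.map_id]
  · unfold planCost
    have hmeas : Measurable (fun z : X × X => dist z.1 z.2 ^ p) :=
      (measurable_fst.dist measurable_snd).pow_const p
    rw [integral_map hd.aemeasurable hmeas.aestronglyMeasurable]
    have hp0 : p ≠ 0 := by linarith
    simp [Real.zero_rpow hp0, Real.zero_rpow (inv_ne_zero hp0)]

/-- With `δ = ‖μ − μ̃‖_TV` and `α ∈ (0,1)` a constant,
`min {δ(1−α), (1/k)·W_{p,1−δ(1−α)}(μ, μ̃)} ≤ RPW_{p,k}(μ, μ̃) ≤ min {δ, (1/k)·W_p(μ, μ̃)}`. -/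
theorem rpw_tv_sandwich
    {X : Type*} [MetricSpace X] [CompactSpace X] [MeasurableSpace X] [BorelSpace X]
    (hdiam : ∀ a b : X, dist a b ≤ 1)
    (μ μt : Measure X) [IsProbabilityMeasure μ] [IsProbabilityMeasure μt]
    (p k : ℝ) (hp : 1 ≤ p) (hk : 0 < k)
    (α : ℝ) (hα : α ∈ Set.Ioo (0:ℝ) 1)
    (δ : ℝ) (hδ : δ = TVdist μ μt) :
    min (δ * (1 - α)) ((1 / k) * partialW p (1 - δ * (1 - α)) μ μt) ≤ RPW p k μ μt ∧
    RPW p k μ μt ≤ min δ ((1 / k) * partialW p 1 μ μt) := by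
  have hδ0 : 0 ≤ δ := by
    rw [hδ]; exact (abs_nonneg _).trans (le_TV μ μt ∅ MeasurableSet.empty)
  have hδ1 : δ ≤ 1 := hδ ▸ TV_le_one μ μt
  have hW : partialW p (1 - δ) μ μt ≤ 0 := by rw [hδ]; exact partialW_TV p hp μ μt
  have hmem : δ ∈ { ε : ℝ | ε ∈ Set.Icc (0:ℝ) 1 ∧ partialW p (1 - ε) μ μt ≤ k * ε } :=
    ⟨⟨hδ0, hδ1⟩, hW.trans (by positivity)⟩
  have hbdd : BddBelow { ε : ℝ | ε ∈ Set.Icc (0:ℝ) 1 ∧ partialW p (1 - ε) μ μt ≤ k * ε } :=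
    ⟨0, fun ε h => h.1.1⟩
  have hR : RPW p k μ μt ≤ δ := csInf_le hbdd hmem
  obtain ⟨hα0, hα1⟩ := hα
  constructor
  · apply le_csInf ⟨δ, hmem⟩
    rintro ε ⟨⟨hε0, hε1⟩, hε⟩
    rcases le_or_gt (δ * (1 - α)) ε with h | h
    · exact (min_le_left _ _).trans h
    · refine (min_le_right _ _).trans ?_
      have := partialW_mono p hp μ μt (1 - δ * (1 - α)) (1 - ε) (by nlinarith)
        (by linarith) (by linarith)
      rw [one_div, inv_mul_le_iff₀ hk]
      linarith
  · refine le_min hR ?_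
    set e := (1 / k) * partialW p 1 μ μt with he
    rcases le_or_gt e 1 with h | h
    · have he0 : 0 ≤ e := mul_nonneg (by positivity) (partialW_nonneg' _ _ _ _)
      refine csInf_le hbdd ⟨⟨he0, h⟩, ?_⟩
      have h2 : k * e = partialW p 1 μ μt := by rw [he]; field_simp
      rw [h2]
      exact partialW_mono p hp μ μt _ _ (by linarith) (by linarith) le_rfl
    · linarith
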